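/- Let K be a ℂ-hull with {0} ⊊ K, and g_K the associated normalized conformal map from the complement of K onto the exterior of the unit disc. Then |e^{cap(K)} g_K(z) − z| ≤ 5 e^{cap(K)} for every z ∈ ℂ \ K. -/

import Mathlib

open Filter Set Topology

/-- `K` is a `ℂ`-hull: a connected compact subset of `ℂ` with connected complement. -/
def IsCHull (K : Set ℂ) : Prop :=
  IsCompact K ∧ IsConnected K ∧ IsConnected Kᶜ

/-- `g` is the normalized Riemann map `g_K` from the complement of the hull `K` onto the
exterior of the closed unit disc, fixing `∞`, with `g_K'(∞) = lim_{z→∞} z / g(z) = exp cap`,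
where `cap = cap(K)` is the whole-plane capacity of `K`. -/
def IsWholePlaneCapacityMap (K : Set ℂ) (g : ℂ → ℂ) (cap : ℝ) : Prop :=
  DifferentiableOn ℂ g Kᶜ ∧ InjOn g Kᶜ ∧ g '' Kᶜ = {z : ℂ | 1 < ‖z‖} ∧
    Tendsto (fun z : ℂ => z / g z) (Bornology.cobounded ℂ) (𝓝 (Real.exp cap))

/-!
Write `R = exp cap`. In the coordinate `1 / z` at `∞` on both sides, `g` becomes a conformal map `p`
of a neighbourhood of `0` onto the unit disc with `p 0 = 0` and `p' 0 = R`; let `F` be its inverse.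

For `z ∈ K` the function `u ↦ 1 / (1 - z F(u))` is holomorphic on the unit disc. Its Taylor
coefficients are polynomials in `z` of degree `n`, with leading coefficient `R⁻ⁿ`, whose size on `K`
is at most `C r⁻ⁿ` for each `r < 1`. As `K` is connected and contains `0`, its radial projection
contains `[0, |k|]` for every `k ∈ K`; moving the roots of the polynomials to the positive half-line
and comparing with the Chebyshev polynomial of `[0, |k|]` gives `|k| ≤ 4 R`.

So `p` is defined on the disc of radius `1 / (4 R)`, and Schwarz's lemma gives `|z| ≤ 4 R |g z|`.
Hence `u / F(u)`, which takes the value `z / g z` at `u = 1 / g z`, is bounded by `4 R` on the unit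
disc and equals `R` at `0`, so that Schwarz's lemma again gives `|z / g z - R| ≤ 5 R / |g z|`.
-/

section RadialProjection

open Polynomial

/-- The real polynomial obtained from `P` by replacing the leading coefficient and all roots by
their absolute values. It carries bounds for `P` on a plane set over to the radial projection
`norm '' S` of the set. -/
noncomputable def radialPoly (P : ℂ[X]) : ℝ[X] :=
  C ‖P.leadingCoeff‖ * ((P.roots.map norm).map fun x => X - C x).prod

lemma leadingCoeff_radialPoly (P : ℂ[X]) : (radialPoly P).leadingCoeff = ‖P.leadingCoeff‖ := by
  rw [radialPoly, leadingCoeff_mul, leadingCoeff_C,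
    (monic_multisetProd_X_sub_C _).leadingCoeff, mul_one]

lemma natDegree_radialPoly (P : ℂ[X]) : (radialPoly P).natDegree = P.natDegree := by
  rcases eq_or_ne P 0 with rfl | hP
  · simp [radialPoly]
  · rw [radialPoly, natDegree_C_mul (norm_ne_zero_iff.2 (leadingCoeff_ne_zero.2 hP)),
      natDegree_multiset_prod_X_sub_C_eq_card, Multiset.card_map,
      (IsAlgClosed.splits P).natDegree_eq_card_roots]

lemma abs_eval_radialPoly_le (P : ℂ[X]) (z : ℂ) : |(radialPoly P).eval ‖z‖| ≤ ‖P.eval z‖ := by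
  have hroots (s : Multiset ℂ) :
      |(s.map fun a => ‖z‖ - ‖a‖).prod| ≤ ‖(s.map fun a => z - a).prod‖ := by
    induction s using Multiset.induction_on with
    | empty => simp
    | cons a s ih =>
      simp only [Multiset.map_cons, Multiset.prod_cons, norm_mul, abs_mul]
      exact mul_le_mul (abs_norm_sub_norm_le z a) ih (abs_nonneg _) (norm_nonneg _)
  conv_rhs => rw [(IsAlgClosed.splits P).eq_prod_roots]
  simp only [radialPoly, eval_mul, eval_C, eval_multiset_prod, Multiset.map_map,
    Function.comp_def, eval_sub, eval_X, abs_mul, abs_norm, norm_mul]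
  exact mul_le_mul_of_nonneg_left (hroots P.roots) (norm_nonneg _)

lemma leadingCoeff_mul_pow_le_of_forall_abs_eval_le {Q : ℝ[X]} {L M : ℝ} (hL : 0 < L)
    (hM : 0 < M) (hQ : ∀ x ∈ Icc 0 L, |Q.eval x| ≤ M) :
    Q.leadingCoeff * (L / 4) ^ Q.natDegree ≤ M := by
  set n := Q.natDegree
  let A : ℝ[X] := C (L / 2) * X + C (L / 2)
  have hA : A.natDegree = 1 := natDegree_linear (by positivity)
  have hA' : A.leadingCoeff = L / 2 := leadingCoeff_linear (by positivity)
  have hcomp : (Q.comp A).natDegree = n := by rw [natDegree_comp, hA, mul_one]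
  have hcheb : (C M⁻¹ * Q.comp A).leadingCoeff ≤ 2 ^ (n - 1) := by
    refine Chebyshev.leadingCoeff_le_of_forall_abs_le_one ?_ fun x hx => ?_
    · exact degree_le_of_natDegree_le ((natDegree_C_mul_le _ _).trans hcomp.le)
    · have hmem : L / 2 * x + L / 2 ∈ Icc 0 L := by constructor <;> nlinarith [hx.1, hx.2]
      have hle : |M⁻¹ * Q.eval (L / 2 * x + L / 2)| ≤ 1 := by
        rw [abs_mul, abs_of_pos (inv_pos.2 hM), inv_mul_le_one₀ hM]
        exact hQ _ hmem
      simpa [A] using hle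
  rw [leadingCoeff_mul, leadingCoeff_C, leadingCoeff_comp (by simp [hA]), hA',
    inv_mul_le_iff₀ hM] at hcheb
  calc Q.leadingCoeff * (L / 4) ^ n = Q.leadingCoeff * (L / 2) ^ n / 2 ^ n := by
        rw [mul_div_assoc, ← div_pow]; norm_num [div_div]
    _ ≤ M * 2 ^ (n - 1) / 2 ^ n := by gcongr
    _ ≤ M * 2 ^ n / 2 ^ n := by gcongr <;> norm_num
    _ = M := by field_simp

lemma norm_leadingCoeff_mul_pow_le {P : ℂ[X]} {S : Set ℂ} {L M : ℝ} (hL : 0 < L) (hM : 0 < M)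
    (hS : Icc 0 L ⊆ norm '' S) (hP : ∀ z ∈ S, ‖P.eval z‖ ≤ M) :
    ‖P.leadingCoeff‖ * (L / 4) ^ P.natDegree ≤ M := by
  rw [← leadingCoeff_radialPoly, ← natDegree_radialPoly]
  refine leadingCoeff_mul_pow_le_of_forall_abs_eval_le hL hM fun x hx => ?_
  obtain ⟨z, hz, rfl⟩ := hS hx
  exact (abs_eval_radialPoly_le P z).trans (hP z hz)

end RadialProjection

section CauchyCoefficients

open Metric

/-- The `n`-th Taylor coefficient of `f` at `0`, as Cauchy's integral over the circle of
radius `r`. -/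
noncomputable def cauchyCoeff (f : ℂ → ℂ) (r : ℝ) (n : ℕ) : ℂ :=
  Real.circleAverage (fun u => (u ^ n)⁻¹ * f u) 0 r

variable {f h : ℂ → ℂ} {r : ℝ} {n : ℕ}

lemma circleIntegrable_inv_pow_mul (hr : 0 < r) (hf : ContinuousOn f (sphere 0 r)) :
    CircleIntegrable (fun u => (u ^ n)⁻¹ * f u) 0 r :=
  (((continuousOn_pow n).inv₀ fun _ hu =>
    pow_ne_zero n (ne_of_mem_sphere hu hr.ne')).mul hf).circleIntegrable hr.le

lemma cauchyCoeff_add (hr : 0 < r) (hf : ContinuousOn f (sphere 0 r))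
    (hh : ContinuousOn h (sphere 0 r)) :
    cauchyCoeff (fun u => f u + h u) r n = cauchyCoeff f r n + cauchyCoeff h r n := by
  simp only [cauchyCoeff, mul_add]
  exact Real.circleAverage_fun_add (circleIntegrable_inv_pow_mul hr hf)
    (circleIntegrable_inv_pow_mul hr hh)

lemma cauchyCoeff_sum_mul {ι : Type*} {s : Finset ι} {f : ι → ℂ → ℂ} (hr : 0 < r)
    (hf : ∀ i ∈ s, ContinuousOn (f i) (sphere 0 r)) (c : ι → ℂ) :
    cauchyCoeff (fun u => ∑ i ∈ s, c i * f i u) r n = ∑ i ∈ s, c i * cauchyCoeff (f i) r n := by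
  have hint (i) (hi : i ∈ s) : CircleIntegrable (fun u => c i • ((u ^ n)⁻¹ * f i u)) 0 r :=
    (circleIntegrable_inv_pow_mul hr (hf i hi)).const_smul
  simp only [cauchyCoeff, ← smul_eq_mul (c _), ← Real.circleAverage_fun_smul]
  rw [← Real.circleAverage_fun_sum hint]
  simp only [smul_eq_mul, Finset.mul_sum, mul_left_comm]

lemma cauchyCoeff_pow_mul (hr : 0 < r) (hh : DifferentiableOn ℂ h (closedBall 0 r)) :
    cauchyCoeff (fun u => u ^ n * h u) r n = h 0 := by
  have hcl : DiffContOnCl ℂ h (ball 0 |r|) := by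
    rw [abs_of_pos hr]
    exact (hh.mono closure_ball_subset_closedBall).diffContOnCl
  rw [← hcl.circleAverage]
  refine Real.circleAverage_congr_sphere fun u hu => ?_
  rw [abs_of_pos hr] at hu
  exact inv_mul_cancel_left₀ (pow_ne_zero n (ne_of_mem_sphere hu hr.ne')) _

lemma norm_cauchyCoeff_le {C : ℝ} (hr : 0 < r) (hf : ∀ u ∈ sphere (0 : ℂ) r, ‖f u‖ ≤ C) :
    ‖cauchyCoeff f r n‖ ≤ C / r ^ n := by
  have hint : ‖∫ θ in 0..2 * Real.pi, (circleMap 0 r θ ^ n)⁻¹ * f (circleMap 0 r θ)‖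
      ≤ C / r ^ n * |2 * Real.pi - 0| := by
    refine intervalIntegral.norm_integral_le_of_norm_le_const fun θ _ => ?_
    rw [norm_mul, norm_inv, norm_pow, norm_circleMap_zero, abs_of_pos hr, inv_mul_eq_div]
    gcongr
    exact hf _ (circleMap_mem_sphere 0 hr.le θ)
  rw [sub_zero, abs_of_pos Real.two_pi_pos] at hint
  rw [cauchyCoeff, Real.circleAverage_def, norm_smul, norm_inv,
    Real.norm_of_nonneg Real.two_pi_pos.le, inv_mul_le_iff₀ Real.two_pi_pos]
  exact hint.trans_eq (mul_comm _ _)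

end CauchyCoefficients

section FaberPolynomials

open Metric Polynomial

/-- The polynomial in `z` that is the `n`-th Taylor coefficient at `0` of
`u ↦ 1 / (1 - z * (u * D u))`, the values of `D` being taken on the circle of radius `r`. Up to
the choice of a weight, these are the Faber polynomials of the complement of the image of
`u ↦ 1 / (u * D u)`. -/
noncomputable def faberPoly (D : ℂ → ℂ) (r : ℝ) (n : ℕ) : ℂ[X] :=
  ∑ m ∈ Finset.range (n + 1), C (cauchyCoeff (fun u => (u * D u) ^ m) r n) * X ^ m

variable {D : ℂ → ℂ} {r : ℝ} {n : ℕ} {z : ℂ}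

lemma coeff_faberPoly (hr : 0 < r) (hD : DifferentiableOn ℂ D (closedBall 0 r)) :
    (faberPoly D r n).coeff n = D 0 ^ n := by
  simp only [faberPoly, finsetSum_coeff, coeff_C_mul_X_pow, Finset.sum_ite_eq,
    Finset.self_mem_range_succ, if_true, mul_pow]
  exact cauchyCoeff_pow_mul hr (hD.pow n)

lemma natDegree_faberPoly_le (D : ℂ → ℂ) (r : ℝ) (n : ℕ) : (faberPoly D r n).natDegree ≤ n :=
  natDegree_sum_le_of_forall_le _ _ fun _ hm =>
    (natDegree_C_mul_X_pow_le _ _).trans (Finset.mem_range_succ_iff.1 hm)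

lemma natDegree_faberPoly (hr : 0 < r) (hD : DifferentiableOn ℂ D (closedBall 0 r))
    (hD0 : D 0 ≠ 0) : (faberPoly D r n).natDegree = n :=
  natDegree_eq_of_le_of_coeff_ne_zero (natDegree_faberPoly_le D r n)
    (coeff_faberPoly hr hD ▸ pow_ne_zero n hD0)

lemma leadingCoeff_faberPoly (hr : 0 < r) (hD : DifferentiableOn ℂ D (closedBall 0 r))
    (hD0 : D 0 ≠ 0) : (faberPoly D r n).leadingCoeff = D 0 ^ n := by
  rw [leadingCoeff, natDegree_faberPoly hr hD hD0, coeff_faberPoly hr hD]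

lemma geom_sum_add_pow_mul_inv {F : Type*} [Field F] {w : F} (hw : 1 - w ≠ 0) (n : ℕ) :
    ∑ m ∈ Finset.range n, w ^ m + w ^ n * (1 - w)⁻¹ = (1 - w)⁻¹ := by
  rw [← mul_right_inj' hw, mul_add, mul_neg_geom_sum, mul_left_comm, mul_inv_cancel₀ hw]
  ring

lemma eval_faberPoly (hr : 0 < r) (hD : DifferentiableOn ℂ D (closedBall 0 r))
    (hz : ∀ u ∈ closedBall 0 r, z * (u * D u) ≠ 1) :
    (faberPoly D r n).eval z = cauchyCoeff (fun u => (1 - z * (u * D u))⁻¹) r n := by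
  have hne (u) (hu : u ∈ closedBall 0 r) : 1 - z * (u * D u) ≠ 0 := sub_ne_zero.2 (hz u hu).symm
  have hcont : ContinuousOn D (sphere 0 r) := hD.continuousOn.mono sphere_subset_closedBall
  have hcont_inv : ContinuousOn (fun u => (1 - z * (u * D u))⁻¹) (sphere 0 r) :=
    ContinuousOn.inv₀ (by fun_prop) fun u hu => hne u (sphere_subset_closedBall hu)
  have hrem : cauchyCoeff (fun u => (z * (u * D u)) ^ (n + 1) * (1 - z * (u * D u))⁻¹) r n = 0 := by
    have h := cauchyCoeff_pow_mul (n := n)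
      (h := fun u => u * ((z * D u) ^ (n + 1) * (1 - z * (u * D u))⁻¹)) hr
      (by fun_prop (disch := assumption))
    rw [zero_mul] at h
    rw [← h]
    congr 1 with u
    ring
  calc (faberPoly D r n).eval z
      = cauchyCoeff (fun u => ∑ m ∈ Finset.range (n + 1), z ^ m * (u * D u) ^ m) r n := by
        rw [cauchyCoeff_sum_mul hr fun m _ => by fun_prop]
        simp only [faberPoly, eval_finsetSum, eval_C_mul, eval_pow, eval_X, mul_comm (z ^ _)]
    _ = cauchyCoeff (fun u => ∑ m ∈ Finset.range (n + 1), z ^ m * (u * D u) ^ m) r n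
          + cauchyCoeff (fun u => (z * (u * D u)) ^ (n + 1) * (1 - z * (u * D u))⁻¹) r n := by
        rw [hrem, add_zero]
    _ = cauchyCoeff (fun u => (1 - z * (u * D u))⁻¹) r n := by
        rw [← cauchyCoeff_add hr (by fun_prop) (by fun_prop)]
        refine Real.circleAverage_congr_sphere fun u hu => ?_
        rw [abs_of_pos hr] at hu
        simp only [← mul_pow z, geom_sum_add_pow_mul_inv (hne u (sphere_subset_closedBall hu))]

end FaberPolynomials

section RadiusBound

open Metric

variable {D : ℂ → ℂ} {K : Set ℂ}

lemma Icc_subset_norm_image_of_isPreconnected (hK : IsPreconnected K) (h0 : 0 ∈ K) {k : ℂ}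
    (hk : k ∈ K) : Icc 0 ‖k‖ ⊆ norm '' K := by
  simpa using hK.intermediate_value h0 hk continuous_norm.continuousOn

lemma exists_norm_eval_faberPoly_le {r : ℝ} (hr : 0 < r)
    (hD : DifferentiableOn ℂ D (closedBall 0 r)) (hK : IsCompact K)
    (hne : ∀ z ∈ K, ∀ u ∈ closedBall 0 r, z * (u * D u) ≠ 1) :
    ∃ C > 0, ∀ n, ∀ z ∈ K, ‖(faberPoly D r n).eval z‖ ≤ C / r ^ n := by
  have hcont : ContinuousOn (fun q : ℂ × ℂ => (1 - q.1 * (q.2 * D q.2))⁻¹)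
      (K ×ˢ closedBall 0 r) := by
    have hD' : ContinuousOn (fun q : ℂ × ℂ => D q.2) (K ×ˢ closedBall 0 r) :=
      hD.continuousOn.comp continuousOn_snd fun q hq => hq.2
    exact (continuousOn_const.sub (continuousOn_fst.mul (continuousOn_snd.mul hD'))).inv₀
      fun q hq => sub_ne_zero.2 (hne _ hq.1 _ hq.2).symm
  obtain ⟨C, hC⟩ := (hK.prod (isCompact_closedBall 0 r)).exists_bound_of_continuousOn hcont
  refine ⟨max C 1, by positivity, fun n z hz => ?_⟩
  rw [eval_faberPoly hr hD (hne z hz)]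
  exact norm_cauchyCoeff_le hr fun u hu =>
    (hC (z, u) ⟨hz, sphere_subset_closedBall hu⟩).trans (le_max_left C 1)

lemma norm_mul_norm_mul_radius_le_four {r : ℝ} (hr : 0 < r)
    (hD : DifferentiableOn ℂ D (closedBall 0 r)) (hK : IsCompact K) (hKc : IsPreconnected K)
    (h0 : 0 ∈ K) (hne : ∀ z ∈ K, ∀ u ∈ closedBall 0 r, z * (u * D u) ≠ 1) {k : ℂ} (hk : k ∈ K) :
    ‖k‖ * ‖D 0‖ * r ≤ 4 := by
  rcases eq_or_ne k 0 with rfl | hk0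
  · simp
  rcases eq_or_ne (D 0) 0 with hD0 | hD0
  · simp [hD0]
  obtain ⟨C, hC, hbound⟩ := exists_norm_eval_faberPoly_le hr hD hK hne
  have hpow (n : ℕ) : (‖k‖ * ‖D 0‖ * r / 4) ^ n ≤ C := by
    have hcheb := norm_leadingCoeff_mul_pow_le (norm_pos_iff.2 hk0) (by positivity)
      (Icc_subset_norm_image_of_isPreconnected hKc h0 hk) (hbound n)
    rw [leadingCoeff_faberPoly hr hD hD0, natDegree_faberPoly hr hD hD0, norm_pow,
      le_div_iff₀ (by positivity), ← mul_pow, ← mul_pow] at hcheb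
    exact (congrArg (· ^ n) (by ring)).trans_le hcheb
  by_contra! hlt
  obtain ⟨n, hn⟩ := pow_unbounded_of_one_lt C (by rwa [one_lt_div four_pos])
  exact (hpow n).not_gt hn

theorem norm_mul_norm_deriv_le_four {F : ℂ → ℂ} (hF : DifferentiableOn ℂ F (ball 0 1))
    (hF0 : F 0 = 0) (hK : IsCompact K) (hKc : IsPreconnected K) (h0 : 0 ∈ K)
    (hne : ∀ z ∈ K, ∀ u ∈ ball 0 1, z * F u ≠ 1) {k : ℂ} (hk : k ∈ K) :
    ‖k‖ * ‖deriv F 0‖ ≤ 4 := by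
  have hD : DifferentiableOn ℂ (dslope F 0) (ball 0 1) :=
    (Complex.differentiableOn_dslope (ball_mem_nhds 0 one_pos)).2 hF
  have hFD (u : ℂ) : u * dslope F 0 u = F u := by
    simpa [hF0] using sub_smul_dslope F 0 u
  have hbound (r : ℝ) (hr : r ∈ Ioo 0 1) : ‖k‖ * ‖deriv F 0‖ * r ≤ 4 := by
    have hsub : closedBall (0 : ℂ) r ⊆ ball 0 1 := closedBall_subset_ball hr.2
    rw [← dslope_same]
    refine norm_mul_norm_mul_radius_le_four hr.1 (hD.mono hsub) hK hKc h0 (fun z hz u hu => ?_) hk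
    rw [hFD]
    exact hne z hz u (hsub hu)
  have htend : Tendsto (fun r => ‖k‖ * ‖deriv F 0‖ * r) (𝓝[<] 1) (𝓝 (‖k‖ * ‖deriv F 0‖)) := by
    simpa using ((continuous_const_mul (‖k‖ * ‖deriv F 0‖)).tendsto 1).mono_left nhdsWithin_le_nhds
  refine le_of_tendsto htend ?_
  filter_upwards [Ioo_mem_nhdsLT one_pos] using hbound

end RadiusBound

section HolomorphicInverse

open Metric

variable {U : Set ℂ} {p F : ℂ → ℂ} {z : ℂ}

lemma not_eventually_eq_of_injOn (hU : U ∈ 𝓝 z) (hp : InjOn p U) : ¬ ∀ᶠ y in 𝓝 z, p y = p z := by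
  intro hconst
  have hz : ∀ᶠ y in 𝓝 z, y = z := by
    filter_upwards [hconst, hU] with y hy hyU using hp hyU (mem_of_mem_nhds hU) hy
  exact not_isOpen_singleton z (isOpen_singleton_iff_nhds_eq_pure z |>.2 <|
    le_antisymm (le_pure_iff.2 hz) (pure_le_nhds z))

lemma nhds_le_map_nhds_of_injOn (hU : IsOpen U) (hp : DifferentiableOn ℂ p U) (hinj : InjOn p U)
    (hz : z ∈ U) : 𝓝 (p z) ≤ map p (𝓝 z) :=
  (hp.analyticAt (hU.mem_nhds hz)).eventually_constant_or_nhds_le_map_nhds.resolve_left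
    (not_eventually_eq_of_injOn (hU.mem_nhds hz) hinj)

lemma eventually_deriv_ne_zero_of_injOn (hU : IsOpen U) (hp : DifferentiableOn ℂ p U)
    (hinj : InjOn p U) (hz : z ∈ U) : ∀ᶠ y in 𝓝[≠] z, deriv p y ≠ 0 := by
  have hanalytic : AnalyticAt ℂ (deriv p) z := (hp.analyticAt (hU.mem_nhds hz)).deriv
  refine hanalytic.eventually_eq_zero_or_eventually_ne_zero.resolve_left fun hzero =>
    not_eventually_eq_of_injOn (hU.mem_nhds hz) hinj ?_
  obtain ⟨r, hr, hball⟩ := eventually_nhds_iff_ball.1 (hzero.and (hU.mem_nhds hz))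
  filter_upwards [ball_mem_nhds z hr] with y hy
  exact isOpen_ball.is_const_of_deriv_eq_zero (convex_ball z r).isPreconnected
    (hp.mono fun w hw => (hball w hw).2) (fun w hw => (hball w hw).1) hy (mem_ball_self hr)

lemma continuousAt_of_leftInvOn (hU : IsOpen U) (hp : DifferentiableOn ℂ p U)
    (hF : LeftInvOn F p U) (hz : z ∈ U) : ContinuousAt F (p z) := by
  have hFp : Tendsto (F ∘ p) (𝓝 z) (𝓝 z) :=
    tendsto_id.congr' (by filter_upwards [hU.mem_nhds hz] with y hy using (hF hy).symm)
  rw [ContinuousAt, hF hz]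
  exact (tendsto_map'_iff.2 hFp).mono_left (nhds_le_map_nhds_of_injOn hU hp hF.injOn hz)

lemma differentiableAt_of_leftInvOn_of_deriv_ne_zero (hU : IsOpen U) (hp : DifferentiableOn ℂ p U)
    (hF : LeftInvOn F p U) (hz : z ∈ U) (hderiv : deriv p z ≠ 0) : DifferentiableAt ℂ F (p z) := by
  have hright : ∀ᶠ w in 𝓝 (p z), p (F w) = w := by
    refine nhds_le_map_nhds_of_injOn hU hp hF.injOn hz (mem_map.2 ?_)
    filter_upwards [hU.mem_nhds hz] with y hy using congrArg p (hF hy)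
  have hpz : HasDerivAt p (deriv p z) (F (p z)) := by
    rw [hF hz]
    exact (hp.differentiableAt (hU.mem_nhds hz)).hasDerivAt
  exact (hpz.of_local_left_inverse (continuousAt_of_leftInvOn hU hp hF hz) hderiv
    hright).differentiableAt

theorem differentiableAt_of_leftInvOn (hU : IsOpen U) (hp : DifferentiableOn ℂ p U)
    (hF : LeftInvOn F p U) (hz : z ∈ U) : DifferentiableAt ℂ F (p z) := by
  -- Critical points of `p` are isolated, so their images are removable singularities of `F`.
  refine (Complex.analyticAt_of_differentiable_on_punctured_nhds_of_continuousAt ?_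
    (continuousAt_of_leftInvOn hU hp hF hz)).differentiableAt
  have hderiv := eventually_nhdsWithin_iff.1 (eventually_deriv_ne_zero_of_injOn hU hp hF.injOn hz)
  refine eventually_nhdsWithin_iff.2 (nhds_le_map_nhds_of_injOn hU hp hF.injOn hz (mem_map.2 ?_))
  filter_upwards [hderiv, hU.mem_nhds hz] with y hy hyU hne
  exact differentiableAt_of_leftInvOn_of_deriv_ne_zero hU hp hF hyU (hy (ne_of_apply_ne p hne))

lemma exists_differentiableOn_invOn {V : Set ℂ} (hU : IsOpen U) (hp : DifferentiableOn ℂ p U)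
    (hbij : BijOn p U V) : ∃ F : ℂ → ℂ, DifferentiableOn ℂ F V ∧ InvOn F p U V := by
  refine ⟨Function.invFunOn p U, fun w hw => ?_, hbij.invOn_invFunOn⟩
  obtain ⟨z, hz, rfl⟩ := hbij.surjOn hw
  exact (differentiableAt_of_leftInvOn hU hp hbij.invOn_invFunOn.1 hz).differentiableWithinAt

lemma deriv_mul_deriv_of_leftInvOn (hU : IsOpen U) (hp : DifferentiableOn ℂ p U)
    (hF : LeftInvOn F p U) (hz : z ∈ U) : deriv F (p z) * deriv p z = 1 := by
  have hcomp := (differentiableAt_of_leftInvOn hU hp hF hz).hasDerivAt.comp z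
    (hp.differentiableAt (hU.mem_nhds hz)).hasDerivAt
  refine hcomp.unique ((hasDerivAt_id z).congr_of_eventuallyEq ?_)
  filter_upwards [hU.mem_nhds hz] with y hy using hF hy

end HolomorphicInverse

section SchwarzBounds

open Metric

variable {f F : ℂ → ℂ} {U : Set ℂ}

lemma norm_le_norm_div_of_mapsTo_ball {r : ℝ} (hr : 0 < r) (hf : DifferentiableOn ℂ f U)
    (hmaps : MapsTo f U (ball 0 1)) (hf0 : f 0 = 0) (hU : ball 0 r ⊆ U) {z : ℂ} (hz : z ∈ U) :
    ‖f z‖ ≤ ‖z‖ / r := by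
  rcases lt_or_ge ‖z‖ r with hzr | hzr
  · have hball : MapsTo f (ball 0 r) (closedBall (f 0) 1) :=
      hf0.symm ▸ (hmaps.mono_left hU).mono_right ball_subset_closedBall
    have hschwarz := Complex.dist_le_div_mul_dist_of_mapsTo_ball (hf.mono hU) hball
      (mem_ball_zero_iff.2 hzr)
    simpa [hf0, inv_mul_eq_div] using hschwarz
  · exact (mem_ball_zero_iff.1 (hmaps hz)).le.trans ((one_le_div hr).2 hzr)

lemma norm_inv_dslope_sub_inv_deriv_le {C : ℝ} (hC : 0 ≤ C) (hF : DifferentiableOn ℂ F (ball 0 1))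
    (hF0 : F 0 = 0) (hderiv : deriv F 0 ≠ 0) (hbound : ∀ u ∈ ball 0 1, ‖u‖ ≤ C * ‖F u‖) {u : ℂ}
    (hu : u ∈ ball 0 1) :
    ‖(dslope F 0 u)⁻¹ - (deriv F 0)⁻¹‖ ≤ (C + ‖(deriv F 0)⁻¹‖) * ‖u‖ := by
  have hDF (v : ℂ) : v * dslope F 0 v = F v := by simpa [hF0] using sub_smul_dslope F 0 v
  have hD {v : ℂ} (hv : v ∈ ball 0 1) (hv0 : v ≠ 0) : 1 ≤ C * ‖dslope F 0 v‖ := by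
    have := hbound v hv
    rw [← hDF, norm_mul, mul_left_comm] at this
    exact (le_mul_iff_one_le_right (norm_pos_iff.2 hv0)).1 this
  have hD_ne {v : ℂ} (hv : v ∈ ball 0 1) : dslope F 0 v ≠ 0 := by
    rcases eq_or_ne v 0 with rfl | hv0
    · rwa [dslope_same]
    · intro hzero
      simpa [hzero, not_le.2 one_pos] using hD hv hv0
  have hdiff : DifferentiableOn ℂ (fun v => (dslope F 0 v)⁻¹) (ball 0 1) :=
    ((Complex.differentiableOn_dslope (ball_mem_nhds 0 one_pos)).2 hF).fun_inv fun v => hD_ne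
  have hmaps : MapsTo (fun v => (dslope F 0 v)⁻¹) (ball 0 1)
      (closedBall (dslope F 0 0)⁻¹ (C + ‖(deriv F 0)⁻¹‖)) := by
    intro v hv
    rcases eq_or_ne v 0 with rfl | hv0
    · exact mem_closedBall_self (by positivity)
    · rw [mem_closedBall, dist_eq_norm, dslope_same]
      refine (norm_sub_le _ _).trans (add_le_add_left ?_ _)
      rw [norm_inv, inv_le_iff_one_le_mul₀ (norm_pos_iff.2 (hD_ne hv))]
      exact hD hv hv0
  simpa [dist_eq_norm] using Complex.dist_le_div_mul_dist_of_mapsTo_ball hdiff hmaps hu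

end SchwarzBounds

section HullsAtInfinity

open Metric

/-- The image of the complement of `K` in the Riemann sphere under `z ↦ 1 / z`, in a form that
needs no case distinction at `0`, which stands for `∞`. -/
def inftyDomain (K : Set ℂ) : Set ℂ :=
  {ζ | ∀ k ∈ K, k * ζ ≠ 1}

variable {K : Set ℂ} {p : ℂ → ℂ} {ζ : ℂ}

lemma zero_mem_inftyDomain (K : Set ℂ) : 0 ∈ inftyDomain K := by simp [inftyDomain]

lemma mem_inftyDomain_iff (hζ : ζ ≠ 0) : ζ ∈ inftyDomain K ↔ ζ⁻¹ ∉ K := by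
  refine ⟨fun h hk => h _ hk (inv_mul_cancel₀ hζ), fun h k hk hkζ => h ?_⟩
  rwa [← eq_inv_of_mul_eq_one_left hkζ]

lemma isOpen_inftyDomain (hK : IsCompact K) : IsOpen (inftyDomain K) :=
  isOpen_iff_eventually.2 fun ζ hζ => hK.eventually_forall_of_forall_eventually fun k hk =>
    (Continuous.tendsto (by fun_prop) (ζ, k)).eventually_ne (hζ k hk)

lemma ball_subset_inftyDomain {M : ℝ} (hM : 0 < M) (hK : ∀ k ∈ K, ‖k‖ ≤ M) :
    ball 0 M⁻¹ ⊆ inftyDomain K := by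
  intro ζ hζ k hk hkζ
  have hlt : ‖k * ζ‖ < 1 := by
    rw [norm_mul]
    calc ‖k‖ * ‖ζ‖ ≤ M * ‖ζ‖ := by gcongr; exact hK k hk
      _ < M * M⁻¹ := by gcongr; exact mem_ball_zero_iff.1 hζ
      _ = 1 := mul_inv_cancel₀ hM.ne'
  exact hlt.ne (hkζ ▸ norm_one)

/-- `p` plays the role of `ζ ↦ 1 / g (1 / ζ)`: it maps the image of the complement of `K` under
`z ↦ 1 / z` conformally onto the unit disc, fixing `0`. -/
structure IsDiscMapAtInfty (K : Set ℂ) (p : ℂ → ℂ) : Prop where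
  differentiableOn : DifferentiableOn ℂ p (inftyDomain K)
  bijOn : BijOn p (inftyDomain K) (ball 0 1)
  map_zero : p 0 = 0

namespace IsDiscMapAtInfty

lemma exists_inverse (hp : IsDiscMapAtInfty K p) (hK : IsCompact K) :
    ∃ F : ℂ → ℂ, DifferentiableOn ℂ F (ball 0 1) ∧ InvOn F p (inftyDomain K) (ball 0 1) ∧
      F 0 = 0 ∧ deriv F 0 * deriv p 0 = 1 := by
  have hopen := isOpen_inftyDomain hK
  have h0 := zero_mem_inftyDomain K
  obtain ⟨F, hF, hinv⟩ := exists_differentiableOn_invOn hopen hp.differentiableOn hp.bijOn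
  refine ⟨F, hF, hinv, ?_, ?_⟩
  · simpa [hp.map_zero] using hinv.1 h0
  · simpa [hp.map_zero] using deriv_mul_deriv_of_leftInvOn hopen hp.differentiableOn hinv.1 h0

lemma deriv_zero_ne_zero (hp : IsDiscMapAtInfty K p) (hK : IsCompact K) : deriv p 0 ≠ 0 := by
  obtain ⟨F, -, -, -, hchain⟩ := hp.exists_inverse hK
  exact right_ne_zero_of_mul_eq_one hchain

theorem norm_le_four_mul_norm_deriv (hp : IsDiscMapAtInfty K p) (hK : IsCompact K)
    (hKc : IsPreconnected K) (h0 : 0 ∈ K) {k : ℂ} (hk : k ∈ K) : ‖k‖ ≤ 4 * ‖deriv p 0‖ := by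
  obtain ⟨F, hF, hinv, hF0, hchain⟩ := hp.exists_inverse hK
  have hkoebe := norm_mul_norm_deriv_le_four hF hF0 hK hKc h0
    (fun z hz u hu => hinv.1.mapsTo hp.bijOn.surjOn hu z hz) hk
  calc ‖k‖ = ‖k‖ * ‖deriv F 0‖ * ‖deriv p 0‖ := by
        rw [mul_assoc, ← norm_mul, hchain, norm_one, mul_one]
    _ ≤ 4 * ‖deriv p 0‖ := by gcongr

lemma norm_apply_le (hp : IsDiscMapAtInfty K p) (hK : IsCompact K)
    (hKc : IsPreconnected K) (h0 : 0 ∈ K) (hζ : ζ ∈ inftyDomain K) :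
    ‖p ζ‖ ≤ 4 * ‖deriv p 0‖ * ‖ζ‖ := by
  have hpos : 0 < 4 * ‖deriv p 0‖ := by simpa using hp.deriv_zero_ne_zero hK
  have hball := ball_subset_inftyDomain hpos fun _ => hp.norm_le_four_mul_norm_deriv hK hKc h0
  have hschwarz := norm_le_norm_div_of_mapsTo_ball (inv_pos.2 hpos) hp.differentiableOn
    hp.bijOn.mapsTo hp.map_zero hball hζ
  rwa [div_inv_eq_mul, mul_comm] at hschwarz

theorem norm_deriv_div_sub_inv_le (hp : IsDiscMapAtInfty K p) (hK : IsCompact K)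
    (hKc : IsPreconnected K) (h0 : 0 ∈ K) (hζ : ζ ∈ inftyDomain K) (hζ0 : ζ ≠ 0) :
    ‖deriv p 0 / p ζ - ζ⁻¹‖ ≤ 5 * ‖deriv p 0‖ := by
  obtain ⟨F, hF, hinv, hF0, hchain⟩ := hp.exists_inverse hK
  have hFbound (u) (hu : u ∈ ball 0 1) : ‖u‖ ≤ 4 * ‖deriv p 0‖ * ‖F u‖ := by
    simpa [hinv.2 hu] using
      hp.norm_apply_le hK hKc h0 (hinv.1.mapsTo hp.bijOn.surjOn hu)
  have hpζ : p ζ ≠ 0 := fun h =>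
    hζ0 (hp.bijOn.injOn hζ (zero_mem_inftyDomain K) (h.trans hp.map_zero.symm))
  have hdslope : dslope F 0 (p ζ) = ζ / p ζ := by
    rw [dslope_of_ne _ hpζ, slope_def_field, hF0, hinv.1 hζ, sub_zero, sub_zero]
  have hschwarz := norm_inv_dslope_sub_inv_deriv_le (by positivity) hF hF0
    (left_ne_zero_of_mul_eq_one hchain) hFbound (hp.bijOn.mapsTo hζ)
  rw [hdslope, inv_div, inv_eq_of_mul_eq_one_right hchain] at hschwarz
  calc ‖deriv p 0 / p ζ - ζ⁻¹‖ = ‖p ζ / ζ - deriv p 0‖ / ‖p ζ‖ := by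
        rw [← norm_div, norm_sub_rev, sub_div, div_div_cancel_left' hpζ]
    _ ≤ (4 * ‖deriv p 0‖ + ‖deriv p 0‖) * ‖p ζ‖ / ‖p ζ‖ := by gcongr
    _ = 5 * ‖deriv p 0‖ := by rw [mul_div_cancel_right₀ _ (norm_ne_zero_iff.2 hpζ)]; ring

end IsDiscMapAtInfty

end HullsAtInfinity

section CapacityMap

open Metric

/-- The map `g` read in the coordinate `1 / z` at `∞` on both sides. The value at `0` is imposed,
as `g 0⁻¹ = g 0` is meaningless. -/
noncomputable def inftyChart (g : ℂ → ℂ) : ℂ → ℂ :=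
  Function.update (fun ζ => (g ζ⁻¹)⁻¹) 0 0

variable {K : Set ℂ} {g : ℂ → ℂ} {cap : ℝ} {z ζ : ℂ}

lemma inftyChart_zero (g : ℂ → ℂ) : inftyChart g 0 = 0 := Function.update_self ..

lemma inftyChart_of_ne_zero (g : ℂ → ℂ) (hζ : ζ ≠ 0) : inftyChart g ζ = (g ζ⁻¹)⁻¹ :=
  Function.update_of_ne hζ ..

namespace IsWholePlaneCapacityMap

lemma one_lt_norm (hg : IsWholePlaneCapacityMap K g cap) (hz : z ∉ K) : 1 < ‖g z‖ :=
  hg.2.2.1.subset (mem_image_of_mem g hz)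

lemma apply_ne_zero (hg : IsWholePlaneCapacityMap K g cap) (hz : z ∉ K) : g z ≠ 0 :=
  norm_pos_iff.1 (one_pos.trans (hg.one_lt_norm hz))

lemma hasDerivAt_inftyChart_zero (hg : IsWholePlaneCapacityMap K g cap) :
    HasDerivAt (inftyChart g) (Real.exp cap : ℂ) 0 := by
  rw [hasDerivAt_iff_tendsto_slope]
  refine (hg.2.2.2.comp tendsto_inv₀_nhdsNE_zero).congr' ?_
  filter_upwards [self_mem_nhdsWithin] with ζ hζ
  rw [slope_def_field, inftyChart_zero, inftyChart_of_ne_zero g hζ, sub_zero, sub_zero,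
    Function.comp_apply, inv_div_comm]

lemma inftyChart_ne_zero (hg : IsWholePlaneCapacityMap K g cap) (hζ : ζ ∈ inftyDomain K)
    (hζ0 : ζ ≠ 0) : inftyChart g ζ ≠ 0 := by
  rw [inftyChart_of_ne_zero g hζ0]
  exact inv_ne_zero (hg.apply_ne_zero ((mem_inftyDomain_iff hζ0).1 hζ))

lemma differentiableOn_inftyChart (hg : IsWholePlaneCapacityMap K g cap) (hK : IsCompact K) :
    DifferentiableOn ℂ (inftyChart g) (inftyDomain K) := by
  intro ζ hζ
  apply DifferentiableAt.differentiableWithinAt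
  rcases eq_or_ne ζ 0 with rfl | hζ0
  · exact hg.hasDerivAt_inftyChart_zero.differentiableAt
  · have hζK : ζ⁻¹ ∉ K := (mem_inftyDomain_iff hζ0).1 hζ
    have hgζ : DifferentiableAt ℂ g ζ⁻¹ :=
      hg.1.differentiableAt (hK.isClosed.isOpen_compl.mem_nhds hζK)
    refine ((hgζ.comp ζ (differentiableAt_inv hζ0)).fun_inv
      (hg.apply_ne_zero hζK)).congr_of_eventuallyEq ?_
    filter_upwards [isOpen_ne.mem_nhds hζ0] with x hx using inftyChart_of_ne_zero g hx

lemma injOn_inftyChart (hg : IsWholePlaneCapacityMap K g cap) :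
    InjOn (inftyChart g) (inftyDomain K) := by
  intro x hx y hy hxy
  rcases eq_or_ne x 0 with rfl | hx0 <;> rcases eq_or_ne y 0 with rfl | hy0
  · rfl
  · exact absurd (hxy.symm.trans (inftyChart_zero g)) (hg.inftyChart_ne_zero hy hy0)
  · exact absurd (hxy.trans (inftyChart_zero g)) (hg.inftyChart_ne_zero hx hx0)
  · rw [inftyChart_of_ne_zero g hx0, inftyChart_of_ne_zero g hy0, inv_inj] at hxy
    exact inv_injective
      (hg.2.1 ((mem_inftyDomain_iff hx0).1 hx) ((mem_inftyDomain_iff hy0).1 hy) hxy)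

lemma mapsTo_inftyChart (hg : IsWholePlaneCapacityMap K g cap) :
    MapsTo (inftyChart g) (inftyDomain K) (ball 0 1) := by
  intro ζ hζ
  rcases eq_or_ne ζ 0 with rfl | hζ0
  · simp [inftyChart_zero]
  · rw [inftyChart_of_ne_zero g hζ0, mem_ball_zero_iff, norm_inv]
    exact inv_lt_one_of_one_lt₀ (hg.one_lt_norm ((mem_inftyDomain_iff hζ0).1 hζ))

lemma surjOn_inftyChart (hg : IsWholePlaneCapacityMap K g cap) (h0 : 0 ∈ K) :
    SurjOn (inftyChart g) (inftyDomain K) (ball 0 1) := by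
  intro u hu
  rcases eq_or_ne u 0 with rfl | hu0
  · exact ⟨0, zero_mem_inftyDomain K, inftyChart_zero g⟩
  · have hu_inv : 1 < ‖u⁻¹‖ := by
      rw [norm_inv]
      exact (one_lt_inv₀ (norm_pos_iff.2 hu0)).2 (mem_ball_zero_iff.1 hu)
    obtain ⟨z, hz, hzu⟩ := hg.2.2.1.superset hu_inv
    have hz0 : z⁻¹ ≠ 0 := inv_ne_zero (ne_of_mem_of_not_mem h0 hz).symm
    refine ⟨z⁻¹, (mem_inftyDomain_iff hz0).2 (by rwa [inv_inv]), ?_⟩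
    rw [inftyChart_of_ne_zero g hz0, inv_inv, hzu, inv_inv]

lemma isDiscMapAtInfty_inftyChart (hg : IsWholePlaneCapacityMap K g cap) (hK : IsCompact K)
    (h0 : 0 ∈ K) : IsDiscMapAtInfty K (inftyChart g) where
  differentiableOn := hg.differentiableOn_inftyChart hK
  bijOn := ⟨hg.mapsTo_inftyChart, hg.injOn_inftyChart, hg.surjOn_inftyChart h0⟩
  map_zero := inftyChart_zero g

end IsWholePlaneCapacityMap

end CapacityMap

/-- For a `ℂ`-hull `K` with `{0} ⊊ K`: `|e^{cap(K)} g_K(z) − z| ≤ 5 e^{cap(K)}`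
for every `z ∈ ℂ \ K`. -/
theorem hull_map_displacement_bound (K : Set ℂ) (g : ℂ → ℂ) (cap : ℝ)
    (hK : IsCHull K) (h0 : ({0} : Set ℂ) ⊂ K)
    (hg : IsWholePlaneCapacityMap K g cap) :
    ∀ z ∉ K, ‖(Real.exp cap : ℂ) * g z - z‖ ≤ 5 * Real.exp cap := by
  intro z hz
  have h0K : 0 ∈ K := h0.subset rfl
  have hz0 : z⁻¹ ≠ 0 := inv_ne_zero (ne_of_mem_of_not_mem h0K hz).symm
  have hzK : z⁻¹ ∈ inftyDomain K := (mem_inftyDomain_iff hz0).2 (by rwa [inv_inv])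
  have hp := hg.isDiscMapAtInfty_inftyChart hK.1 h0K
  have hbound := hp.norm_deriv_div_sub_inv_le hK.1 hK.2.1.isPreconnected h0K hzK hz0
  rwa [hg.hasDerivAt_inftyChart_zero.deriv, inftyChart_of_ne_zero g hz0, inv_inv, div_inv_eq_mul,
    Complex.norm_real, Real.norm_of_nonneg (Real.exp_pos cap).le] at hbound
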